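/- (Concentration bound via Ledoux's expansion coefficient.) Let (X, d, μ) be a metric measure space, 0 < ε < 1, and let r ≥ ρ > 0. Suppose E = Exp_L(X; 1−ε, ρ) is finite. Then α^ε(r) ≤ (1 − ε)·E·E^{−r/ρ}. In particular, if E > 1 then X has exponential concentration: α^ε(r) ≤ (1 − ε)·E·exp(−(ln E)·r/ρ) for all r ≥ ρ. -/

import Mathlib

open MeasureTheory Metric Set Real

noncomputable section

/-- Isoperimetric enlargement `A_r = {x | d(x, A) ≤ r}`. -/
def enl {X : Type*} [MetricSpace X] (A : Set X) (r : ℝ) : Set X :=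
  {x | Metric.infDist x A ≤ r}

/-- Concentration function `α^ε(r)`. -/
def concFn {X : Type*} [MetricSpace X] [MeasurableSpace X] (μ : Measure X) (ε r : ℝ) : ℝ :=
  sSup {v : ℝ | ∃ A : Set X, MeasurableSet A ∧ ε ≤ (μ A).toReal ∧ v = 1 - (μ (enl A r)).toReal}

/-- Lipschitz constant of a real-valued function. -/
def lipConst {X : Type*} [MetricSpace X] (f : X → ℝ) : ℝ :=
  sSup {c : ℝ | ∃ x y : X, x ≠ y ∧ c = |f x - f y| / dist x y}

/-- `f` is Lipschitz (some finite Lipschitz constant). -/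
def IsLip {X : Type*} [MetricSpace X] (f : X → ℝ) : Prop :=
  ∃ C : ℝ, ∀ x y : X, |f x - f y| ≤ C * dist x y

/-- `m` is a quantile of order `ε` of `f` for `μ`. -/
def IsQuantile {X : Type*} [MetricSpace X] [MeasurableSpace X] (μ : Measure X)
    (ε : ℝ) (f : X → ℝ) (m : ℝ) : Prop :=
  ε ≤ (μ {x | f x ≤ m}).toReal ∧ 1 - ε ≤ (μ {x | m ≤ f x}).toReal

/-- Admissible constants for Gromov's expansion coefficient. -/
def expGSet {X : Type*} [MetricSpace X] [MeasurableSpace X] (μ : Measure X) (ε ρ : ℝ) : Set ℝ :=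
  {e : ℝ | 1 ≤ e ∧ ∀ A : Set X, MeasurableSet A → ε ≤ (μ A).toReal →
    e * ε ≤ (μ (enl A ρ)).toReal}

/-- Gromov's expansion coefficient. -/
def expG {X : Type*} [MetricSpace X] [MeasurableSpace X] (μ : Measure X) (ε ρ : ℝ) : ℝ :=
  sSup (expGSet μ ε ρ)

/-- Admissible constants for Ledoux's expansion coefficient. -/
def expLSet {X : Type*} [MetricSpace X] [MeasurableSpace X] (μ : Measure X) (ε ρ : ℝ) : Set ℝ :=
  {e : ℝ | 1 ≤ e ∧ ∀ B : Set X, MeasurableSet B → (μ (enl B ρ)).toReal ≤ ε →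
    e * (μ B).toReal ≤ (μ (enl B ρ)).toReal}

/-- Ledoux's expansion coefficient. -/
def expL {X : Type*} [MetricSpace X] [MeasurableSpace X] (μ : Measure X) (ε ρ : ℝ) : ℝ :=
  sSup (expLSet μ ε ρ)

/-- Partial diameter of a Borel measure on ℝ. -/
def partDiam (ν : Measure ℝ) (κ : ℝ) : ℝ :=
  sInf {D : ℝ | 0 ≤ D ∧ ∃ A : Set ℝ, MeasurableSet A ∧ Metric.diam A ≤ D ∧ 1 - κ ≤ (ν A).toReal}

/-- Observable diameter `ObsDiam(X; -κ)`. -/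
def obsDiam {X : Type*} [MetricSpace X] [MeasurableSpace X] (μ : Measure X) (κ : ℝ) : ℝ :=
  sSup {v : ℝ | ∃ f : X → ℝ, LipschitzWith 1 f ∧ v = partDiam (μ.map f) κ}

/-- `μ` is doubling with constant `C`. -/
def IsDoubling {X : Type*} [MetricSpace X] [MeasurableSpace X] (μ : Measure X) (C : ℝ) : Prop :=
  1 ≤ C ∧ ∀ (x : X) (r : ℝ), 0 < r →
    (μ (Metric.closedBall x (2 * r))).toReal ≤ C * (μ (Metric.closedBall x r)).toReal

/-!
Let `A` have mass at least `ε` and let `e` be an admissible constant in Ledoux's expansion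
coefficient at level `1 - ε`. For `t ≥ 0` the set `(A_t)ᶜ` has mass at most `1 - ε`, and for
`s > t + ρ` it contains the `ρ`-enlargement of `(A_s)ᶜ`, so `e μ((A_s)ᶜ) ≤ μ((A_t)ᶜ)`. Letting `s`
decrease to `t + ρ`, each increase of the radius by `ρ` divides the mass of the complement by `e`.
Taking `⌊r / ρ⌋` such steps from radius `0` gives `μ((A_r)ᶜ) ≤ (1 - ε) e ^ (-⌊r / ρ⌋)`.
-/

open Filter Topology

lemma inv_pow_floor_le_mul_rpow_neg {e x : ℝ} (he : 1 ≤ e) :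
    (e ^ ⌊x⌋₊)⁻¹ ≤ e * e ^ (-x) := by
  have he0 : 0 < e := zero_lt_one.trans_le he
  calc (e ^ ⌊x⌋₊)⁻¹ = e ^ (-(⌊x⌋₊ : ℝ)) := by rw [rpow_neg he0.le, rpow_natCast]
    _ ≤ e ^ (1 + -x) := rpow_le_rpow_of_exponent_le he (by linarith [Nat.lt_floor_add_one x])
    _ = e * e ^ (-x) := by rw [rpow_add he0, rpow_one]

section Enlargement

variable {X : Type*} [MetricSpace X] {A : Set X} {r s t ρ : ℝ}

lemma subset_enl (hr : 0 ≤ r) : A ⊆ enl A r :=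
  fun _ hx ↦ (infDist_zero_of_mem hx).trans_le hr

lemma enl_mono (A : Set X) : Monotone (enl A) :=
  fun _ _ hst _ hx ↦ le_trans hx hst

lemma isClosed_enl (A : Set X) (r : ℝ) : IsClosed (enl A r) :=
  isClosed_le (continuous_infDist_pt A) continuous_const

lemma biInter_gt_enl (A : Set X) (t : ℝ) : ⋂ s > t, enl A s = enl A t := by
  ext x
  simp only [mem_iInter]
  exact forall_gt_imp_ge_iff_le_of_dense

-- Junk value: `infDist x ∅ = 0`, so `enl ∅ ρ` is the whole space when `0 ≤ ρ`.
lemma enl_compl_enl_subset (hne : (enl A s)ᶜ.Nonempty) (hts : t + ρ < s) :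
    enl (enl A s)ᶜ ρ ⊆ (enl A t)ᶜ := by
  intro x (hxρ : infDist x (enl A s)ᶜ ≤ ρ) (hxt : infDist x A ≤ t)
  have far_from_compl : s - infDist x A ≤ infDist x (enl A s)ᶜ := by
    refine (le_infDist hne).2 fun y hy ↦ ?_
    have hsy : s < infDist y A := not_le.1 hy
    have htri : infDist y A ≤ infDist x A + dist y x := infDist_le_infDist_add_dist
    rw [dist_comm] at htri
    linarith
  linarith

end Enlargement

section Expansion

variable {X : Type*} [MetricSpace X] [MeasurableSpace X] {μ : Measure X} {A : Set X}
  {e ε η r s t ρ : ℝ}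

lemma one_mem_expLSet [IsFiniteMeasure μ] (hρ : 0 ≤ ρ) : 1 ∈ expLSet μ η ρ :=
  ⟨le_rfl, fun _ _ _ ↦ (one_mul _).trans_le (measureReal_mono (subset_enl hρ))⟩

lemma expL_mem_expLSet [IsFiniteMeasure μ] (hρ : 0 ≤ ρ) (hbdd : BddAbove (expLSet μ η ρ)) :
    expL μ η ρ ∈ expLSet μ η ρ := by
  refine ⟨le_csSup hbdd (one_mem_expLSet hρ), fun B hB hBη ↦ ?_⟩
  rcases (measureReal_nonneg : 0 ≤ μ.real B).eq_or_lt with hB0 | hBpos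
  · exact (mul_eq_zero_of_right _ hB0.symm).trans_le measureReal_nonneg
  · refine (le_div_iff₀ hBpos).1 (csSup_le ⟨1, one_mem_expLSet hρ⟩ fun e he ↦ ?_)
    exact (le_div_iff₀ hBpos).2 (he.2 B hB hBη)

variable [OpensMeasurableSpace X]

lemma tendsto_measureReal_compl_enl [IsFiniteMeasure μ] (A : Set X) (t : ℝ) :
    Tendsto (fun s ↦ μ.real (enl A s)ᶜ) (𝓝[>] t) (𝓝 (μ.real (enl A t)ᶜ)) := by
  have tendsto_enl : Tendsto (fun s ↦ μ (enl A s)) (𝓝[>] t) (𝓝 (μ (enl A t))) := by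
    simpa only [biInter_gt_enl, Function.comp_def] using
      tendsto_measure_biInter_gt (μ := μ) (a := t)
        (fun s _ ↦ (isClosed_enl A s).nullMeasurableSet) (fun _ _ _ hst ↦ enl_mono A hst)
        ⟨t + 1, lt_add_one t, measure_ne_top μ _⟩
  simp only [measureReal_compl (isClosed_enl A _).measurableSet]
  exact ((ENNReal.tendsto_toReal (measure_ne_top μ _)).comp tendsto_enl).const_sub _

lemma mul_measureReal_compl_enl_le_of_lt [IsFiniteMeasure μ] (he : e ∈ expLSet μ η ρ)
    (ht : μ.real (enl A t)ᶜ ≤ η) (hts : t + ρ < s) :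
    e * μ.real (enl A s)ᶜ ≤ μ.real (enl A t)ᶜ := by
  rcases (enl A s)ᶜ.eq_empty_or_nonempty with hempty | hne
  · simp [hempty]
  · have hmono : μ.real (enl (enl A s)ᶜ ρ) ≤ μ.real (enl A t)ᶜ :=
      measureReal_mono (enl_compl_enl_subset hne hts)
    exact (he.2 _ (isClosed_enl A s).measurableSet.compl (hmono.trans ht)).trans hmono

lemma mul_measureReal_compl_enl_add_le [IsFiniteMeasure μ] (he : e ∈ expLSet μ η ρ)
    (ht : μ.real (enl A t)ᶜ ≤ η) :
    e * μ.real (enl A (t + ρ))ᶜ ≤ μ.real (enl A t)ᶜ :=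
  le_of_tendsto ((tendsto_measureReal_compl_enl A (t + ρ)).const_mul e) <|
    eventually_mem_nhdsWithin.mono fun _ ↦ mul_measureReal_compl_enl_le_of_lt he ht

lemma pow_mul_measureReal_compl_enl_add_le [IsFiniteMeasure μ] (hρ : 0 ≤ ρ)
    (he : e ∈ expLSet μ η ρ) (ht : μ.real (enl A t)ᶜ ≤ η) (n : ℕ) :
    e ^ n * μ.real (enl A (t + n * ρ))ᶜ ≤ μ.real (enl A t)ᶜ := by
  induction n with
  | zero => simp
  | succ n ih =>
    have he0 : 0 ≤ e := zero_le_one.trans he.1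
    have htn : μ.real (enl A (t + n * ρ))ᶜ ≤ η :=
      (measureReal_mono (compl_subset_compl.2
        (enl_mono A (le_add_of_nonneg_right (by positivity))))).trans ht
    calc e ^ (n + 1) * μ.real (enl A (t + (n + 1 : ℕ) * ρ))ᶜ
        = e ^ n * (e * μ.real (enl A (t + n * ρ + ρ))ᶜ) := by
          rw [pow_succ, mul_assoc]; push_cast; ring_nf
      _ ≤ e ^ n * μ.real (enl A (t + n * ρ))ᶜ := by
          gcongr; exact mul_measureReal_compl_enl_add_le he htn
      _ ≤ μ.real (enl A t)ᶜ := ih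

lemma measureReal_compl_enl_le [IsProbabilityMeasure μ] (hA : ε ≤ μ.real A) (hr : 0 ≤ r) :
    μ.real (enl A r)ᶜ ≤ 1 - ε := by
  rw [probReal_compl_eq_one_sub (isClosed_enl A r).measurableSet]
  exact sub_le_sub_left (hA.trans (measureReal_mono (subset_enl hr))) 1

lemma measureReal_compl_enl_le_rpow [IsProbabilityMeasure μ] (hε : ε ≤ 1) (hρ : 0 < ρ)
    (hr : 0 ≤ r) (he : e ∈ expLSet μ (1 - ε) ρ) (hA : ε ≤ μ.real A) :
    μ.real (enl A r)ᶜ ≤ (1 - ε) * e * e ^ (-(r / ρ)) := by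
  have he0 : 0 < e := zero_lt_one.trans_le he.1
  set n := ⌊r / ρ⌋₊
  have hnr : 0 + n * ρ ≤ r := by
    rw [zero_add]; exact (le_div_iff₀ hρ).1 (Nat.floor_le (by positivity))
  have h0 : μ.real (enl A 0)ᶜ ≤ 1 - ε := measureReal_compl_enl_le hA le_rfl
  calc μ.real (enl A r)ᶜ ≤ μ.real (enl A (0 + n * ρ))ᶜ :=
        measureReal_mono (compl_subset_compl.2 (enl_mono A hnr))
    _ ≤ (1 - ε) * (e ^ n)⁻¹ := by
        rw [← div_eq_mul_inv, le_div_iff₀' (by positivity)]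
        exact (pow_mul_measureReal_compl_enl_add_le hρ.le he h0 n).trans h0
    _ ≤ (1 - ε) * (e * e ^ (-(r / ρ))) :=
        mul_le_mul_of_nonneg_left (inv_pow_floor_le_mul_rpow_neg he.1) (sub_nonneg.2 hε)
    _ = (1 - ε) * e * e ^ (-(r / ρ)) := (mul_assoc _ _ _).symm

lemma concFn_le_of_mem_expLSet [IsProbabilityMeasure μ] (hε : ε ≤ 1) (hρ : 0 < ρ) (hr : 0 ≤ r)
    (he : e ∈ expLSet μ (1 - ε) ρ) :
    concFn μ ε r ≤ (1 - ε) * e * e ^ (-(r / ρ)) := by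
  have he0 : 0 ≤ e := zero_le_one.trans he.1
  refine Real.sSup_le ?_ (mul_nonneg (mul_nonneg (sub_nonneg.2 hε) he0) (rpow_nonneg he0 _))
  rintro _ ⟨A, -, hA, rfl⟩
  exact (probReal_compl_eq_one_sub (isClosed_enl A r).measurableSet).symm.trans_le
    (measureReal_compl_enl_le_rpow hε hρ hr he hA)

end Expansion

theorem stmt11_general {X : Type*} [MetricSpace X] [MeasurableSpace X] [OpensMeasurableSpace X]
    (μ : Measure X) [IsProbabilityMeasure μ] {ε ρ r : ℝ} (hε : ε ≤ 1) (hρ : 0 < ρ) (hr : 0 ≤ r)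
    (hfin : BddAbove (expLSet μ (1 - ε) ρ)) :
    concFn μ ε r ≤ (1 - ε) * expL μ (1 - ε) ρ * (expL μ (1 - ε) ρ) ^ (-(r / ρ)) ∧
      concFn μ ε r ≤ (1 - ε) * expL μ (1 - ε) ρ *
        Real.exp (-(Real.log (expL μ (1 - ε) ρ)) * r / ρ) := by
  have hE : expL μ (1 - ε) ρ ∈ expLSet μ (1 - ε) ρ := expL_mem_expLSet hρ.le hfin
  have hbound := concFn_le_of_mem_expLSet hε hρ hr hE
  have hexp : (expL μ (1 - ε) ρ) ^ (-(r / ρ)) =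
      Real.exp (-(Real.log (expL μ (1 - ε) ρ)) * r / ρ) := by
    rw [rpow_def_of_pos (zero_lt_one.trans_le hE.1)]
    ring_nf
  exact ⟨hbound, hexp ▸ hbound⟩

theorem stmt11 {X : Type*} [MetricSpace X] [MeasurableSpace X] [BorelSpace X]
    (μ : Measure X) [IsProbabilityMeasure μ] (ε ρ r : ℝ)
    (hε0 : 0 < ε) (hε1 : ε < 1) (hρ : 0 < ρ) (hr : ρ ≤ r)
    (hfin : BddAbove (expLSet μ (1 - ε) ρ)) :
    concFn μ ε r ≤ (1 - ε) * expL μ (1 - ε) ρ * (expL μ (1 - ε) ρ) ^ (-(r / ρ)) ∧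
      (1 < expL μ (1 - ε) ρ →
        concFn μ ε r ≤ (1 - ε) * expL μ (1 - ε) ρ *
          Real.exp (-(Real.log (expL μ (1 - ε) ρ)) * r / ρ)) :=
  (stmt11_general μ hε1.le hρ (hρ.le.trans hr) hfin).imp_right fun h _ ↦ h
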